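/- Let c̄ be a k-cd for n nodes (n ≥ 1) with M(c̄) = {m} for some m ∈ [k], and let j ∈ [k] ∖ {m}. Then the expected change of the gap in one step of the 3-majority dynamics satisfies E[C_{m,t+1} − C_{j,t+1} | C_t = c̄] ≥ s(c̄)·(1 + γ(c̄)) + c_m·α(c̄). -/

import Mathlib

open Finset

/-- The color appearing at least twice among `x, y, z`, or `x` if all three are distinct. -/
def maj3 {k : ℕ} (x y z : Fin k) : Fin k := if y = z then y else x

/-- Number of nodes with color `j` in the assignment `a`. -/
def cnt {n k : ℕ} (a : Fin n → Fin k) (j : Fin k) : ℕ :=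
  (Finset.univ.filter (fun i => a i = j)).card

/-- One sample for a round of the 3-majority dynamics: each node picks three nodes
(uniformly at random, with replacement). -/
abbrev Sample (n : ℕ) := Fin n → Fin n × Fin n × Fin n

/-- The assignment obtained from `a` after one step of the 3-majority dynamics with samples `S`. -/
def stepA {n k : ℕ} (a : Fin n → Fin k) (S : Sample n) : Fin n → Fin k :=
  fun i => maj3 (a (S i).1) (a (S i).2.1) (a (S i).2.2)

/-- Probability that the event `E` holds for the configuration obtained from `a`
after one step of the 3-majority dynamics (samples are uniform and independent). -/
noncomputable def stepPr {n k : ℕ} (a : Fin n → Fin k) (E : (Fin n → Fin k) → Prop) : ℝ :=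
  (Nat.card {S : Sample n // E (stepA a S)} : ℝ) / (Nat.card (Sample n) : ℝ)

/-- Expectation of `f` of the configuration obtained from `a` after one step of the
3-majority dynamics. -/
noncomputable def stepE {n k : ℕ} (a : Fin n → Fin k) (f : (Fin n → Fin k) → ℝ) : ℝ :=
  (∑ S : Sample n, f (stepA a S)) / (Nat.card (Sample n) : ℝ)

/-- `m(c̄)`: the size of the largest color class. -/
def mval {k : ℕ} (c : Fin k → ℕ) : ℕ := Finset.univ.sup c

/-- `M(c̄)`: the set of colors attaining the maximum. -/
def Mset {k : ℕ} (c : Fin k → ℕ) : Finset (Fin k) :=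
  Finset.univ.filter (fun j => c j = mval c)

/-- `s(c̄)`: the bias, i.e. the gap between the (unique) maximum and the second largest
color class; `0` if the maximum is not unique. -/
def sval {k : ℕ} (c : Fin k → ℕ) : ℕ :=
  if (Mset c).card = 1 then mval c - (Finset.univ \ Mset c).sup c else 0

/-- `α(c̄) = (n − m(c̄))·s(c̄)/n²`. -/
noncomputable def alphaV (n : ℕ) {k : ℕ} (c : Fin k → ℕ) : ℝ :=
  ((n : ℝ) - mval c) * sval c / (n : ℝ) ^ 2

/-- `γ(c̄) = (n·m(c̄) − Σ_h c_h²)/n² − α(c̄)`. -/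
noncomputable def gammaV (n : ℕ) {k : ℕ} (c : Fin k → ℕ) : ℝ :=
  ((n : ℝ) * mval c - ∑ h, (c h : ℝ) ^ 2) / (n : ℝ) ^ 2 - alphaV n c

/-- The trajectory of the 3-majority dynamics started at `a`, driven by the samples `S`
for the first `N` rounds. -/
def trajA {n k N : ℕ} (a : Fin n → Fin k) (S : Fin N → Sample n) : ℕ → Fin n → Fin k
  | 0 => a
  | t + 1 => if h : t < N then stepA (trajA a S t) (S ⟨t, h⟩) else trajA a S t

/-- Probability of an event `E` for an `N`-round run of the 3-majority dynamics
(all samples of all rounds are uniform and independent). -/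
noncomputable def runPr {n k : ℕ} (N : ℕ) (a : Fin n → Fin k)
    (E : (Fin N → Sample n) → Prop) : ℝ :=
  (Nat.card {S : Fin N → Sample n // E S} : ℝ) / (Nat.card (Fin N → Sample n) : ℝ)

/-!
A color class of `w` nodes has expected size `f(w) = w (1 + (n w - Σ_h c_h²) / n²)` after one step.
The map `f` is increasing on `[0, ∞)` and `c_j ≤ c_m - s`, so the expected gap is at least
`f(c_m) - f(c_m - s)`, which exceeds `s (1 + γ) + c_m α` by exactly `c_m s (c_m - s) / n²`.
-/

open scoped BigOperators

lemma expect_comp_eval {ι β M : Type*} [Fintype ι] [DecidableEq ι] [Fintype β] [AddCommMonoid M]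
    [Module ℚ≥0 M] (i : ι) (g : β → M) : 𝔼 f : ι → β, g (f i) = 𝔼 b, g b := by
  have hsum := Fintype.sum_piFinset_apply g univ i
  rw [Fintype.piFinset_univ] at hsum
  have : Nonempty ι := ⟨i⟩
  obtain hβ | hβ := isEmpty_or_nonempty β
  · simp only [univ_eq_empty, expect_empty]
  have hpow : Fintype.card β ^ Fintype.card ι =
      Fintype.card β * Fintype.card β ^ (Fintype.card ι - 1) :=
    (mul_pow_sub_one Fintype.card_ne_zero _).symm
  rw [expect, expect, hsum, card_univ, card_univ, Fintype.card_fun, hpow,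
    ← Nat.cast_smul_eq_nsmul ℚ≥0, smul_smul]
  congr 1
  push_cast
  field_simp

lemma ite_maj3_eq {R : Type*} [NonAssocRing R] {k : ℕ} (x y z h : Fin k) :
    (if maj3 x y z = h then 1 else 0 : R) =
      (if y = h then 1 else 0) * (if z = h then 1 else 0) +
        (if x = h then 1 else 0) * (1 - if y = z then 1 else 0) := by
  unfold maj3
  split_ifs <;> simp_all

/-- The fraction of nodes with color `h` in the assignment `a`, i.e. the probability that a
uniformly sampled node has this color. -/
noncomputable def freq {n k : ℕ} (a : Fin n → Fin k) (h : Fin k) : ℝ := cnt a h / n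

/-- The mean-field map of the 3-majority dynamics: the expected size, one step after the
configuration `c`, of a color class with `w` nodes. The size `w` is a real argument so that the
map can be compared at sizes that no color class attains. -/
noncomputable def meanNext (n : ℕ) {k : ℕ} (c : Fin k → ℕ) (w : ℝ) : ℝ :=
  w * (1 + (n * w - ∑ h, (c h : ℝ) ^ 2) / (n : ℝ) ^ 2)

section OneStep

variable {n k : ℕ}

lemma cast_cnt (a : Fin n → Fin k) (h : Fin k) : (cnt a h : ℝ) = ∑ i, if a i = h then 1 else 0 := by
  simp only [cnt, Finset.sum_boole]

lemma sum_cnt (a : Fin n → Fin k) : ∑ h, cnt a h = n := by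
  simpa [cnt] using (Finset.card_eq_sum_card_fiberwise (f := a) (s := univ) (t := univ)
    fun _ _ => mem_coe.2 (mem_univ _)).symm

lemma expect_ite_eq_freq (a : Fin n → Fin k) (h : Fin k) :
    𝔼 i, (if a i = h then 1 else 0 : ℝ) = freq a h := by
  rw [Fintype.expect_eq_sum_div_card, ← cast_cnt, Fintype.card_fin, freq]

lemma expect_expect_ite_eq (a : Fin n → Fin k) :
    𝔼 y, 𝔼 z, (if a y = a z then 1 else 0 : ℝ) = ∑ h, freq a h ^ 2 := by
  have split_by_color (y z : Fin n) : (if a y = a z then 1 else 0 : ℝ) =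
      ∑ h, (if a y = h then 1 else 0) * (if a z = h then 1 else 0) := by
    simp [eq_comm]
  simp only [split_by_color, expect_sum_comm, ← mul_expect, ← expect_mul, expect_ite_eq_freq, sq]

lemma expect_ite_maj3_eq [NeZero n] (a : Fin n → Fin k) (h : Fin k) :
    𝔼 t : Fin n × Fin n × Fin n, (if maj3 (a t.1) (a t.2.1) (a t.2.2) = h then 1 else 0 : ℝ) =
      freq a h ^ 2 + freq a h * (1 - ∑ i, freq a i ^ 2) := by
  calc 𝔼 t : Fin n × Fin n × Fin n, (if maj3 (a t.1) (a t.2.1) (a t.2.2) = h then 1 else 0 : ℝ)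
      = 𝔼 x, 𝔼 y, 𝔼 z, (if maj3 (a x) (a y) (a z) = h then 1 else 0 : ℝ) := by
        simp only [← univ_product_univ, expect_product]
    _ = freq a h ^ 2 + freq a h * (1 - ∑ i, freq a i ^ 2) := by
        simp only [ite_maj3_eq, expect_add_distrib, expect_sub_distrib, ← mul_expect, ← expect_mul,
          Fintype.expect_const, expect_ite_eq_freq, expect_expect_ite_eq, sq]

lemma stepE_eq_expect (a : Fin n → Fin k) (f : (Fin n → Fin k) → ℝ) :
    stepE a f = 𝔼 S, f (stepA a S) := by
  rw [stepE, Fintype.expect_eq_sum_div_card, Nat.card_eq_fintype_card]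

lemma stepE_sub (a : Fin n → Fin k) (f g : (Fin n → Fin k) → ℝ) :
    stepE a (fun b => f b - g b) = stepE a f - stepE a g := by
  simp only [stepE_eq_expect, expect_sub_distrib]

lemma stepE_cnt_eq_meanNext [NeZero n] (a : Fin n → Fin k) (h : Fin k) :
    stepE a (fun b => (cnt b h : ℝ)) = meanNext n (cnt a) (cnt a h) := by
  have hn : (n : ℝ) ≠ 0 := NeZero.ne _
  calc stepE a (fun b => (cnt b h : ℝ))
      = ∑ i, 𝔼 S : Sample n,
          if maj3 (a (S i).1) (a (S i).2.1) (a (S i).2.2) = h then 1 else 0 := by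
        simp only [stepE_eq_expect, cast_cnt, expect_sum_comm]
        rfl
    _ = ∑ _i : Fin n, (freq a h ^ 2 + freq a h * (1 - ∑ i, freq a i ^ 2)) :=
        Finset.sum_congr rfl fun i _ => (expect_comp_eval i _).trans (expect_ite_maj3_eq a h)
    _ = meanNext n (cnt a) (cnt a h) := by
        simp only [freq, meanNext, div_pow, ← Finset.sum_div, sum_const, card_univ,
          Fintype.card_fin, nsmul_eq_mul]
        field_simp
        ring

end OneStep

section Bias

variable {k : ℕ} {c : Fin k → ℕ}

lemma add_sval_le_mval {m j : Fin k} (hm : m ∈ Mset c) (hj : j ≠ m) : c j + sval c ≤ mval c := by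
  have hle : c j ≤ mval c := le_sup (mem_univ j)
  unfold sval
  split_ifs with hcard
  · have hj_notMem : j ∉ Mset c := fun h => hj (card_le_one.1 hcard.le j h m hm)
    have hj_le : c j ≤ (univ \ Mset c).sup c :=
      le_sup (mem_sdiff.2 ⟨mem_univ j, hj_notMem⟩)
    lia
  · simpa using hle

lemma monotoneOn_meanNext {n : ℕ} (hc : ∑ h, c h ≤ n) :
    MonotoneOn (meanNext n c) (Set.Ici 0) := by
  intro y (hy : 0 ≤ y) z (hz : 0 ≤ z) hyz
  have hsq : ∑ h, (c h : ℝ) ^ 2 ≤ (n : ℝ) ^ 2 :=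
    calc ∑ h, (c h : ℝ) ^ 2 ≤ (∑ h, (c h : ℝ)) ^ 2 :=
          sum_sq_le_sq_sum_of_nonneg fun h _ => Nat.cast_nonneg (c h)
      _ ≤ (n : ℝ) ^ 2 := by gcongr; exact_mod_cast hc
  have hfrac : (∑ h, (c h : ℝ) ^ 2) / (n : ℝ) ^ 2 ≤ 1 := div_le_one_of_le₀ hsq (by positivity)
  have hfactor : 0 ≤ 1 + (n * y - ∑ h, (c h : ℝ) ^ 2) / (n : ℝ) ^ 2 := by
    rw [sub_div]
    have : 0 ≤ n * y / (n : ℝ) ^ 2 := by positivity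
    linarith
  unfold meanNext
  gcongr

lemma meanNext_mval_sub_meanNext (n : ℕ) (c : Fin k → ℕ) :
    meanNext n c (mval c) - meanNext n c (mval c - sval c) =
      sval c * (1 + gammaV n c) + mval c * alphaV n c +
        mval c * sval c * (mval c - sval c) / (n : ℝ) ^ 2 := by
  unfold meanNext gammaV alphaV
  ring

end Bias

theorem expected_gap_ge_general {n k : ℕ} [NeZero n] (a : Fin n → Fin k) {m j : Fin k}
    (hm : m ∈ Mset (cnt a)) (hj : j ≠ m) :
    stepE a (fun b => (cnt b m : ℝ) - (cnt b j : ℝ)) ≥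
      (sval (cnt a) : ℝ) * (1 + gammaV n (cnt a)) + (cnt a m : ℝ) * alphaV n (cnt a) := by
  have hmax : cnt a m = mval (cnt a) := (mem_filter.1 hm).2
  have hbias : (cnt a j : ℝ) ≤ mval (cnt a) - sval (cnt a) :=
    le_sub_iff_add_le.2 (by exact_mod_cast add_sval_le_mval hm hj)
  have hrunner_up : (0 : ℝ) ≤ mval (cnt a) - sval (cnt a) := (Nat.cast_nonneg _).trans hbias
  have hmono : meanNext n (cnt a) (cnt a j) ≤ meanNext n (cnt a) (mval (cnt a) - sval (cnt a)) :=
    monotoneOn_meanNext (sum_cnt a).le (Set.mem_Ici.2 (Nat.cast_nonneg _)) hrunner_up hbias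
  have hexcess : (0 : ℝ) ≤
      mval (cnt a) * sval (cnt a) * (mval (cnt a) - sval (cnt a)) / (n : ℝ) ^ 2 := by
    positivity
  rw [stepE_sub, stepE_cnt_eq_meanNext, stepE_cnt_eq_meanNext, hmax]
  linarith [meanNext_mval_sub_meanNext n (cnt a)]

/-- If `M(c̄) = {m}` and `j ≠ m`, the expected gap after one step satisfies
`E[C_{m,t+1} − C_{j,t+1} | C_t = c̄] ≥ s(c̄)·(1 + γ(c̄)) + c_m·α(c̄)`. -/
theorem expected_gap_ge (n k : ℕ) (hn : 1 ≤ n) (c : Fin k → ℕ) (hc : ∑ h, c h = n)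
    (a : Fin n → Fin k) (ha : ∀ h, cnt a h = c h) (m : Fin k) (hM : Mset c = {m})
    (j : Fin k) (hj : j ≠ m) :
    stepE a (fun b => (cnt b m : ℝ) - (cnt b j : ℝ)) ≥
      (sval c : ℝ) * (1 + gammaV n c) + (c m : ℝ) * alphaV n c := by
  have : NeZero n := ⟨by lia⟩
  obtain rfl : cnt a = c := funext ha
  exact expected_gap_ge_general a (by simp [hM]) hj
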